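/- Let 0 ≤ r1, r2 ≤ n and 0 ≤ s ≤ min(r1, n − r1, r2, n − r2). Then Σ_{x1 ∈ X_{r1}} Σ_{x2 ∈ X_{r2}} λ_s^{r1,r2}(|x2 \ x1|; n)² = ([r1]_s [n−r2]_s / ([n−r1]_s [r2]_s)) · binom(n, r1) · binom(n, r2) / (binom(n, s) − binom(n, s−1)), where binom(n, −1) = 0; equivalently, the Hilbert–Schmidt norm tr(Λ_s^{r1,r2} ∘ (Λ_s^{r1,r2})*) equals this quantity. -/

import Mathlib

/-- Falling factorial `z(z-1)⋯(z-k+1)` for complex `z`. -/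
noncomputable def cfall (z : ℂ) (k : ℕ) : ℂ := ∏ i ∈ Finset.range k, (z - i)

/-- Generalized binomial coefficient `binom(t, j)` for complex `t`. -/
noncomputable def cbinom (t : ℂ) (j : ℕ) : ℂ := cfall t j / (Nat.factorial j)

/-- The Hahn kernel `λ_s^{r1,r2}(t; n)`. -/
noncomputable def hahn (n r1 r2 s : ℕ) (t : ℂ) : ℂ :=
  ∑ j ∈ Finset.range (s + 1),
    (-1 : ℂ) ^ j * cbinom t j * cfall (s : ℂ) j * cfall ((n : ℂ) - s + 1) j /
      (cfall ((n : ℂ) - r1) j * cfall (r2 : ℂ) j)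

/-- The operator `Λ_s^{r1,r2} : (X_{r1} → ℂ) → (X_{r2} → ℂ)` with kernel
`λ_s^{r1,r2}(|x2 \ x1|; n)`. -/
noncomputable def Lam (Ω : Type*) [Fintype Ω] [DecidableEq Ω] (n r1 r2 s : ℕ)
    (ψ : {x : Finset Ω // x.card = r1} → ℂ) : {x : Finset Ω // x.card = r2} → ℂ :=
  fun x2 => ∑ x1 : {x : Finset Ω // x.card = r1},
    hahn n r1 r2 s ((((x2 : Finset Ω) \ (x1 : Finset Ω)).card : ℕ) : ℂ) * ψ x1

/-!
The kernel is a Hahn polynomial, and for fixed `x₁` the inner sum over `x₂` is its squared norm for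
the hypergeometric weight `binom(n - r₁, a) binom(r₁, b)`, `a + b = r₂`, with `a = |x₂ \ x₁|`.
Because the mixed factorial moments of this weight factor, the moment of the kernel against
`[b]_k` is an alternating sum `∑ⱼ (-1)ʲ binom(s, j) F(j)`. For `k < s`, `F` is a polynomial of
degree `s - 1`, so the sum vanishes; for `k = s`, `F` is a polynomial of degree `s` divided by a
linear factor, so the sum is a barycentric Lagrange interpolation formula. Since
`[a]_s ≡ (-1)ˢ [b]_s` modulo the moments that vanish, only the leading coefficient of the second
copy of the kernel contributes to the norm.
-/

open Finset Polynomial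

section FallingFactorial

theorem cfall_eq_eval_descPochhammer (z : ℂ) (k : ℕ) : cfall z k = (descPochhammer ℂ k).eval z :=
  (descPochhammer_eval_eq_prod_range k z).symm

theorem cfall_natCast (a k : ℕ) : cfall a k = a.descFactorial k := by
  rw [cfall_eq_eval_descPochhammer, descPochhammer_eval_eq_descFactorial]

@[simp]
theorem cfall_zero (z : ℂ) : cfall z 0 = 1 := by simp [cfall]

theorem cfall_succ (z : ℂ) (k : ℕ) : cfall z (k + 1) = cfall z k * (z - k) :=
  prod_range_succ _ _

theorem cfall_add (z : ℂ) (a b : ℕ) : cfall z (a + b) = cfall z a * cfall (z - a) b := by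
  simp only [cfall_eq_eval_descPochhammer, ← descPochhammer_mul ℂ a b, eval_mul, eval_comp,
    eval_sub, eval_X, eval_natCast]

theorem cfall_succ_left (z : ℂ) (k : ℕ) : cfall z (k + 1) = z * cfall (z - 1) k := by
  rw [add_comm, cfall_add]
  simp [cfall]

@[simp]
theorem cfall_zero_succ (k : ℕ) : cfall 0 (k + 1) = 0 := by
  rw [cfall_succ_left, zero_mul]

theorem cfall_natCast_succ_succ (a k : ℕ) :
    cfall (a + 1 : ℕ) (k + 1) = (a + 1) * cfall a k := by
  rw [cfall_succ_left, Nat.cast_add_one, add_sub_cancel_right]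

theorem cfall_add_mul_cfall_sub (z : ℂ) (j k m : ℕ) :
    cfall z (j + k) * cfall (z - k - j) m = cfall z (k + m) * cfall (z - (k + m)) j := by
  have hleft := cfall_add z (j + k) m
  have hright := cfall_add z (k + m) j
  push_cast at hleft hright
  rw [← hright, sub_sub, add_comm (k : ℂ), ← hleft]
  ring_nf

theorem add_one_mul_cfall_add (z : ℂ) (j s : ℕ) :
    (z + 1) * cfall z (j + s) = cfall (z + 1) s * cfall (z - s + 1) (j + 1) := by
  rw [sub_add_eq_add_sub, ← cfall_add, ← add_assoc, cfall_succ_left, add_sub_cancel_right,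
    add_comm j]

theorem cfall_natCast_ne_zero {a k : ℕ} (h : k ≤ a) : cfall a k ≠ 0 := by
  rw [cfall_natCast]
  exact_mod_cast (Nat.descFactorial_pos.2 h).ne'

theorem cfall_sub_one_sub (z : ℂ) (s : ℕ) : cfall (s - 1 - z) s = (-1) ^ s * cfall z s := by
  rw [cfall_eq_eval_descPochhammer, descPochhammer_eval_eq_ascPochhammer,
    cfall_eq_eval_descPochhammer, ← ascPochhammer_eval_neg_eq_descPochhammer]
  ring_nf

theorem factorial_mul_choose_eq_cfall (a k : ℕ) : (k.factorial : ℂ) * a.choose k = cfall a k := by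
  rw [cfall_natCast, Nat.descFactorial_eq_factorial_mul_choose, Nat.cast_mul]

end FallingFactorial

section AlternatingSum

theorem prod_erase_range_natCast_sub {R : Type*} [CommRing R] (i d : ℕ) :
    ∏ j ∈ (range (i + d + 1)).erase i, ((i : R) - j) =
      (-1) ^ d * (i.factorial * d.factorial) := by
  have split : (range (i + d + 1)).erase i = range i ∪ Ico (i + 1) (i + 1 + d) := by
    ext; simp; lia
  have below : ∏ j ∈ range i, ((i : R) - j) = i.factorial := by
    rw [← descPochhammer_eval_eq_prod_range, descPochhammer_eval_eq_descFactorial,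
      Nat.descFactorial_self]
  have above : ∏ j ∈ Ico (i + 1) (i + 1 + d), ((i : R) - j) = (-1) ^ d * d.factorial := by
    have hneg (j : ℕ) : (i : R) - (i + 1 + j : ℕ) = -1 * (j + 1 : ℕ) := by push_cast; ring
    simp only [prod_Ico_eq_prod_range, Nat.add_sub_cancel_left, hneg, prod_mul_distrib,
      prod_const, card_range, ← Nat.cast_prod, prod_range_add_one_eq_factorial]
  rw [split, prod_union (by rw [disjoint_left]; simp; lia), below, above]
  ring

variable {K : Type*} [Field K] [CharZero K]

theorem neg_one_pow_mul_choose_eq_inv_prod {i s : ℕ} (hi : i ≤ s) :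
    (-1) ^ i * (s.choose i : K) =
      (-1) ^ s * s.factorial * (∏ j ∈ (range (s + 1)).erase i, ((i : K) - j))⁻¹ := by
  obtain ⟨d, rfl⟩ := Nat.exists_eq_add_of_le hi
  rw [prod_erase_range_natCast_sub, Nat.cast_add_choose, pow_add]
  field_simp

theorem sum_alternating_choose_mul_eval {s : ℕ} {P : K[X]} (hP : P.degree ≤ s) :
    ∑ i ∈ range (s + 1), (-1) ^ i * s.choose i * P.eval (i : K) =
      (-1) ^ s * s.factorial * P.coeff s := by
  have hdeg : P.degree < #(range (s + 1)) :=
    hP.trans_lt (by rw [card_range]; exact_mod_cast s.lt_succ_self)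
  have hcoeff := Lagrange.coeff_eq_sum (v := ((↑) : ℕ → K)) Nat.cast_injective.injOn hdeg
  rw [card_range, Nat.add_sub_cancel] at hcoeff
  rw [hcoeff, mul_sum]
  refine sum_congr rfl fun i hi => ?_
  rw [neg_one_pow_mul_choose_eq_inv_prod (mem_range_succ_iff.1 hi)]
  ring

theorem sum_alternating_choose_mul_eval_div_sub {s : ℕ} {P : K[X]} (hP : P.degree ≤ s) {x : K}
    (hx : ∀ i ∈ range (s + 1), x ≠ i) :
    ∑ i ∈ range (s + 1), (-1) ^ i * s.choose i * (P.eval (i : K) / (x - i)) =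
      (-1) ^ s * s.factorial * (P.eval x / ∏ i ∈ range (s + 1), (x - i)) := by
  have hdeg : P.degree < #(range (s + 1)) :=
    hP.trans_lt (by rw [card_range]; exact_mod_cast s.lt_succ_self)
  have hprod : ∏ i ∈ range (s + 1), (x - i) ≠ 0 :=
    prod_ne_zero_iff.2 fun i hi => sub_ne_zero.2 (hx i hi)
  have hinterp := Lagrange.eval_interpolate_not_at_node (fun i : ℕ => P.eval (i : K)) hx
  rw [← Lagrange.eq_interpolate Nat.cast_injective.injOn hdeg, Lagrange.eval_nodal] at hinterp
  rw [hinterp, mul_div_cancel_left₀ _ hprod, mul_sum]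
  refine sum_congr rfl fun i hi => ?_
  rw [neg_one_pow_mul_choose_eq_inv_prod (mem_range_succ_iff.1 hi), Lagrange.nodalWeight,
    prod_inv_distrib]
  ring

end AlternatingSum

section FallingFactorialSum

variable (c : ℂ) (k : ℕ)

theorem eval_descPochhammer_comp_C_sub_X (x : ℂ) :
    ((descPochhammer ℂ k).comp (C c - X)).eval x = cfall (c - x) k := by
  simp [cfall_eq_eval_descPochhammer]

theorem natDegree_descPochhammer_comp_C_sub_X :
    ((descPochhammer ℂ k).comp (C c - X)).natDegree = k := by
  have hlin : (C c - X).natDegree = 1 := by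
    rw [← natDegree_neg, neg_sub, natDegree_X_sub_C]
  rw [natDegree_comp, descPochhammer_natDegree, hlin, mul_one]

variable {k} {n s : ℕ}

theorem sum_alternating_cfall_div_eq_zero (hk : k < s) (hs : s + k ≤ n) :
    ∑ j ∈ range (s + 1), (-1 : ℂ) ^ j * s.choose j *
      (cfall (n - s + 1) j * cfall (c - j) k / cfall n (j + k)) = 0 := by
  obtain ⟨m, rfl⟩ := Nat.exists_eq_add_of_lt hk
  set P := (descPochhammer ℂ k).comp (C c - X) * (descPochhammer ℂ m).comp (C ((n : ℂ) - k) - X)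
  have hdeg : P.degree < (k + m + 1 : ℕ) := by
    refine degree_le_natDegree.trans_lt (Nat.cast_lt.2 (natDegree_mul_le.trans_lt ?_))
    simp only [natDegree_descPochhammer_comp_C_sub_X, Nat.lt_succ_self]
  have hterm (j : ℕ) (hj : j ≤ k + m + 1) :
      cfall (n - (k + m + 1 : ℕ) + 1) j * cfall (c - j) k / cfall n (j + k) =
        P.eval (j : ℂ) / cfall n (k + m) := by
    have hsplit := cfall_add_mul_cfall_sub n j k m
    have hn : (n : ℂ) - (k + m + 1 : ℕ) + 1 = n - (k + m) := by push_cast; ring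
    rw [eval_mul, eval_descPochhammer_comp_C_sub_X, eval_descPochhammer_comp_C_sub_X,
      hn, div_eq_div_iff (cfall_natCast_ne_zero (by lia)) (cfall_natCast_ne_zero (by lia))]
    linear_combination -cfall (c - j) k * hsplit
  calc
    _ = ∑ j ∈ range (k + m + 1 + 1),
          (-1) ^ j * (k + m + 1).choose j * P.eval (j : ℂ) / cfall n (k + m) :=
      sum_congr rfl fun j hj => by rw [hterm j (mem_range_succ_iff.1 hj), mul_div_assoc]
    _ = 0 := by
      rw [← sum_div, sum_alternating_choose_mul_eval hdeg.le, coeff_eq_zero_of_degree_lt hdeg,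
        mul_zero, zero_div]

theorem cfall_div_cfall_add_self {j : ℕ} (hs : 2 * s ≤ n) (hj : j ≤ s) :
    cfall (n - s + 1) j / cfall n (j + s) =
      (n + 1) / cfall (n + 1) s / ((n : ℂ) - s + 1 - j) := by
  have hn_add : cfall (n : ℂ) (j + s) ≠ 0 := cfall_natCast_ne_zero (by lia)
  have hn_succ : cfall ((n : ℂ) + 1) s ≠ 0 := by
    exact_mod_cast cfall_natCast_ne_zero (show s ≤ n + 1 by lia)
  have hsub : (n : ℂ) - s + 1 - j ≠ 0 := by
    rw [← Nat.cast_sub (by lia), sub_ne_zero]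
    exact_mod_cast (by lia)
  have hsplit := add_one_mul_cfall_add n j s
  rw [cfall_succ] at hsplit
  rw [div_div, div_eq_div_iff hn_add (mul_ne_zero hn_succ hsub)]
  linear_combination -hsplit

theorem sum_alternating_cfall_div (hs : 2 * s ≤ n) :
    ∑ j ∈ range (s + 1), (-1 : ℂ) ^ j * s.choose j *
      (cfall (n - s + 1) j * cfall (c - j) s / cfall n (j + s)) =
        s.factorial * cfall (n - c) s / cfall n (2 * s) := by
  set P := (descPochhammer ℂ s).comp (C c - X)
  set x : ℂ := n - s + 1 with hx
  have hxj (j : ℕ) (hj : j ∈ range (s + 1)) : x ≠ j := by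
    rw [hx, ← Nat.cast_sub (by lia)]
    exact_mod_cast (by have := mem_range.1 hj; lia)
  have hn : (n : ℂ) + 1 ≠ 0 := by exact_mod_cast n.succ_ne_zero
  have hPx : P.eval x = (-1) ^ s * cfall (n - c) s := by
    rw [eval_descPochhammer_comp_C_sub_X, ← cfall_sub_one_sub, hx]
    ring_nf
  have hdeg : P.degree ≤ s :=
    degree_le_of_natDegree_le (natDegree_descPochhammer_comp_C_sub_X c s).le
  have hsign : (-1 : ℂ) ^ s * (-1) ^ s = 1 := pow_mul_pow_eq_one s (by norm_num)
  calc
    _ = (n + 1) / cfall (n + 1) s *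
          ∑ j ∈ range (s + 1), (-1) ^ j * s.choose j * (P.eval (j : ℂ) / (x - j)) := by
      rw [mul_sum]
      refine sum_congr rfl fun j hj => ?_
      rw [mul_div_right_comm, cfall_div_cfall_add_self hs (mem_range_succ_iff.1 hj),
        eval_descPochhammer_comp_C_sub_X]
      ring
    _ = (n + 1) / cfall (n + 1) s *
          ((-1) ^ s * s.factorial * ((-1) ^ s * cfall (n - c) s / cfall x (s + 1))) := by
      rw [sum_alternating_choose_mul_eval_div_sub hdeg hxj, hPx]
      rfl
    _ = s.factorial * cfall (n - c) s * ((n + 1) / (cfall (n + 1) s * cfall x (s + 1))) := by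
      linear_combination (n + 1) / cfall (n + 1 : ℂ) s *
        (s.factorial * (cfall (n - c) s / cfall x (s + 1))) * hsign
    _ = s.factorial * cfall (n - c) s / cfall n (2 * s) := by
      rw [← add_one_mul_cfall_add, two_mul, div_mul_cancel_left₀ hn, div_eq_mul_inv]

end FallingFactorialSum

section Hypergeometric

variable {M : Type*} [AddCommMonoid M]

/-- The sum of `f a b` against the unnormalised hypergeometric weight: `a` and `b` are the numbers
of marked and unmarked elements in a sample of size `R` from `A` marked and `B` unmarked ones. -/
def hypergeomSum (A B R : ℕ) (f : ℕ → ℕ → M) : M :=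
  ∑ p ∈ antidiagonal R, (A.choose p.1 * B.choose p.2) • f p.1 p.2

theorem hypergeomSum_comm (A B R : ℕ) (f : ℕ → ℕ → M) :
    hypergeomSum A B R f = hypergeomSum B A R fun b a => f a b := by
  rw [hypergeomSum, ← Nat.sum_antidiagonal_swap]
  simp only [hypergeomSum, Prod.fst_swap, Prod.snd_swap, mul_comm]

theorem hypergeomSum_one (A B R : ℕ) :
    hypergeomSum A B R (fun _ _ => (1 : ℂ)) = (A + B).choose R := by
  simp [hypergeomSum, Nat.add_choose_eq]

theorem hypergeomSum_sum_mul {ι : Type*} (A B R : ℕ) (t : Finset ι) (c : ι → ℂ)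
    (f : ι → ℕ → ℕ → ℂ) :
    hypergeomSum A B R (fun a b => ∑ i ∈ t, c i * f i a b) =
      ∑ i ∈ t, c i * hypergeomSum A B R (f i) := by
  simp only [hypergeomSum, smul_sum, mul_sum, mul_smul_comm]
  exact sum_comm

theorem hypergeomSum_succ_cfall_succ_mul (A B R j : ℕ) (g : ℕ → ℂ) :
    hypergeomSum (A + 1) B (R + 1) (fun a b => cfall a (j + 1) * g b) =
      (A + 1) * hypergeomSum A B R fun a b => cfall a j * g b := by
  have absorb (a : ℕ) : ((A + 1).choose (a + 1) * (a + 1) : ℂ) = (A + 1) * A.choose a := by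
    exact_mod_cast (Nat.add_one_mul_choose_eq A a).symm
  simp only [hypergeomSum, Nat.sum_antidiagonal_succ, mul_sum, nsmul_eq_mul]
  simp only [cfall_natCast_succ_succ, Nat.cast_zero, cfall_zero_succ, zero_mul, mul_zero, zero_add]
  refine sum_congr rfl fun p _ => ?_
  push_cast
  linear_combination (B.choose p.2 * cfall p.1 j * g p.2) * absorb p.1

theorem hypergeomSum_zero_sample_cfall_succ_mul (A B j : ℕ) (g : ℕ → ℂ) :
    hypergeomSum A B 0 (fun a b => cfall a (j + 1) * g b) = 0 := by
  simp [hypergeomSum]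

theorem hypergeomSum_zero_marked_cfall_succ_mul (B R j : ℕ) (g : ℕ → ℂ) :
    hypergeomSum 0 B R (fun a b => cfall a (j + 1) * g b) = 0 := by
  refine sum_eq_zero fun p _ => ?_
  rcases p with ⟨_ | a, b⟩ <;> simp

theorem hypergeomSum_cfall_mul_cfall_of_zero (B k : ℕ)
    (base : ∀ A R, hypergeomSum A B R (fun _ b => cfall b k) * cfall (A + B : ℕ) k =
      cfall B k * (A + B).choose R * cfall R k) (A R j : ℕ) :
    hypergeomSum A B R (fun a b => cfall a j * cfall b k) * cfall (A + B : ℕ) (j + k) =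
      cfall A j * cfall B k * (A + B).choose R * cfall R (j + k) := by
  induction j generalizing A R with
  | zero => simpa using base A R
  | succ j ih =>
    have hjk : j + 1 + k = (j + k) + 1 := by ring
    rcases A with _ | A
    · simp [hypergeomSum_zero_marked_cfall_succ_mul]
    rcases R with _ | R
    · simp [hypergeomSum_zero_sample_cfall_succ_mul, hjk]
    have absorb : (A + B + 1 : ℂ) * (A + B).choose R = (A + B + 1).choose (R + 1) * (R + 1) := by
      exact_mod_cast Nat.add_one_mul_choose_eq (A + B) R
    have hAB := ih A R
    rw [hypergeomSum_succ_cfall_succ_mul, hjk, Nat.add_right_comm A 1 B]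
    simp only [cfall_natCast_succ_succ]
    push_cast at hAB ⊢
    linear_combination (A + 1) * (A + B + 1) * hAB +
      (A + 1) * cfall A j * cfall B k * cfall R (j + k) * absorb

theorem hypergeomSum_cfall_mul_cfall (A B R j k : ℕ) :
    hypergeomSum A B R (fun a b => cfall a j * cfall b k) * cfall (A + B : ℕ) (j + k) =
      cfall A j * cfall B k * (A + B).choose R * cfall R (j + k) := by
  refine hypergeomSum_cfall_mul_cfall_of_zero B k (fun A R => ?_) A R j
  have hswap := hypergeomSum_cfall_mul_cfall_of_zero A 0 (fun B R => ?_) B R k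
  · rw [hypergeomSum_comm, add_comm A B]
    simpa using hswap
  · simp [hypergeomSum_one]

end Hypergeometric

section Counting

variable {Ω : Type*} [DecidableEq Ω]

theorem card_filter_card_sdiff_card_inter (u x : Finset Ω) (a b : ℕ) :
    #{y ∈ u.powerset | #(y \ x) = a ∧ #(y ∩ x) = b} =
      (#(u \ x)).choose a * (#(u ∩ x)).choose b := by
  rw [← card_powersetCard, ← card_powersetCard, ← card_product]
  have union_sdiff_inter (q) (hq : q ∈ (u \ x).powersetCard a ×ˢ (u ∩ x).powersetCard b) :
      (q.1 ∪ q.2) \ x = q.1 ∧ (q.1 ∪ q.2) ∩ x = q.2 := by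
    grind
  refine card_bij' (fun y _ => (y \ x, y ∩ x)) (fun q _ => q.1 ∪ q.2) ?_ ?_ ?_ ?_
  · grind
  · grind
  · grind
  · grind

theorem sum_powersetCard_card_sdiff_card_inter {M : Type*} [AddCommMonoid M] (u x : Finset Ω)
    (R : ℕ) (f : ℕ → ℕ → M) :
    ∑ y ∈ u.powersetCard R, f #(y \ x) #(y ∩ x) = hypergeomSum #(u \ x) #(u ∩ x) R f := by
  have hmaps (y) (hy : y ∈ u.powersetCard R) : (#(y \ x), #(y ∩ x)) ∈ antidiagonal R := by
    rw [HasAntidiagonal.mem_antidiagonal, card_sdiff_add_card_inter, (mem_powersetCard.1 hy).2]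
  rw [← sum_fiberwise_of_maps_to hmaps]
  refine sum_congr rfl fun p hp => ?_
  have hfiber : {y ∈ u.powersetCard R | (#(y \ x), #(y ∩ x)) = p} =
      {y ∈ u.powerset | #(y \ x) = p.1 ∧ #(y ∩ x) = p.2} := by
    grind [HasAntidiagonal.mem_antidiagonal, card_sdiff_add_card_inter]
  rw [sum_congr rfl (g := fun _ => f p.1 p.2) (by grind), sum_const, hfiber,
    card_filter_card_sdiff_card_inter]

end Counting

section Hahn

variable {A B R s : ℕ}

/-- The coefficient of the falling factorial `[t]_j` in the Hahn kernel `hahn (A + B) B R s`. -/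
noncomputable def hahnCoeff (A B R s j : ℕ) : ℂ :=
  (-1) ^ j * s.choose j * (cfall ((A + B : ℕ) - s + 1) j / (cfall A j * cfall R j))

theorem hahn_eq_sum (A B R s : ℕ) (t : ℂ) :
    hahn (A + B) B R s t = ∑ j ∈ range (s + 1), hahnCoeff A B R s j * cfall t j := by
  refine sum_congr rfl fun j _ => ?_
  have hA : ((A + B : ℕ) : ℂ) - B = A := by push_cast; ring
  have hj : (j.factorial : ℂ) ≠ 0 := Nat.cast_ne_zero.2 j.factorial_ne_zero
  rw [hA, cbinom, ← factorial_mul_choose_eq_cfall s j, hahnCoeff]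
  field_simp

/-- The mixed factorial moment, of order `j` in the marked and `k` in the unmarked elements, of the
Hahn kernel for the hypergeometric weight. -/
noncomputable def hahnMoment (A B R s j k : ℕ) : ℂ :=
  hypergeomSum A B R fun a b => hahn (A + B) B R s a * (cfall a j * cfall b k)

theorem hahnMoment_zero_left {k : ℕ} (hA : s ≤ A) (hR : s ≤ R) (hk : s + k ≤ A + B) :
    hahnMoment A B R s 0 k = cfall B k * (A + B).choose R *
      ∑ j ∈ range (s + 1), (-1 : ℂ) ^ j * s.choose j *
        (cfall ((A + B : ℕ) - s + 1) j * cfall (R - j) k / cfall (A + B : ℕ) (j + k)) := by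
  simp only [hahnMoment, hahn_eq_sum, cfall_zero, one_mul, sum_mul, mul_assoc]
  rw [hypergeomSum_sum_mul, mul_sum, mul_sum]
  refine sum_congr rfl fun j hj => ?_
  have hjs : j ≤ s := mem_range_succ_iff.1 hj
  have hn : cfall (A + B : ℕ) (j + k) ≠ 0 := cfall_natCast_ne_zero (by lia)
  have hAj : cfall A j ≠ 0 := cfall_natCast_ne_zero (hjs.trans hA)
  have hRj : cfall R j ≠ 0 := cfall_natCast_ne_zero (hjs.trans hR)
  rw [eq_div_of_mul_eq hn (hypergeomSum_cfall_mul_cfall A B R j k), cfall_add R, hahnCoeff]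
  field_simp

theorem hahnMoment_succ_left (A B R s j k : ℕ) :
    hahnMoment A B R s (j + 1) k =
      (R - k - j) * hahnMoment A B R s j k - hahnMoment A B R s j (k + 1) := by
  simp only [hahnMoment, hypergeomSum, mul_sum, ← sum_sub_distrib, nsmul_eq_mul]
  refine sum_congr rfl fun p hp => ?_
  rw [← HasAntidiagonal.mem_antidiagonal.1 hp]
  simp only [cfall_succ]
  push_cast
  ring

theorem hahnMoment_eq_zero (hA : s ≤ A) (hR : s ≤ R) (hs : 2 * s ≤ A + B) {j k : ℕ}
    (hjk : j + k < s) : hahnMoment A B R s j k = 0 := by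
  induction j generalizing k with
  | zero =>
    rw [hahnMoment_zero_left hA hR (by lia),
      sum_alternating_cfall_div_eq_zero _ (by lia) (by lia), mul_zero]
  | succ j ih =>
    rw [hahnMoment_succ_left, ih (by lia), ih (by lia), mul_zero, sub_zero]

theorem hahnMoment_add_eq (hA : s ≤ A) (hR : s ≤ R) (hs : 2 * s ≤ A + B) {j k : ℕ}
    (hjk : j + k = s) : hahnMoment A B R s j k = (-1) ^ j * hahnMoment A B R s 0 s := by
  induction j generalizing k with
  | zero => simp [← hjk]
  | succ j ih =>
    rw [hahnMoment_succ_left, hahnMoment_eq_zero hA hR hs (by lia), ih (by lia)]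
    ring

theorem hahnMoment_zero_self (hA : s ≤ A) (hR : s ≤ R) (hs : 2 * s ≤ A + B) :
    hahnMoment A B R s 0 s = cfall B s * (A + B).choose R *
      (s.factorial * cfall ((A + B : ℕ) - R) s / cfall (A + B : ℕ) (2 * s)) := by
  rw [hahnMoment_zero_left hA hR (by lia), sum_alternating_cfall_div _ hs]

theorem choose_sub_choose_pred_mul (n s : ℕ) :
    ((n.choose s : ℂ) - if s = 0 then 0 else (n.choose (s - 1) : ℂ)) *
      (s.factorial * cfall (n - s + 1) s) = cfall n (2 * s) := by
  rcases s with _ | m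
  · simp
  have hm := factorial_mul_choose_eq_cfall n m
  have hsucc := factorial_mul_choose_eq_cfall n (m + 1)
  have hshift : (n : ℂ) - (m + 1 : ℕ) + 1 = n - m := by push_cast; ring
  have hadd : cfall n (2 * (m + 1)) = cfall n m * cfall (n - m) (m + 1) * (n - (2 * m + 1)) := by
    rw [show 2 * (m + 1) = m + (m + 1) + 1 by ring, cfall_succ, cfall_add]
    push_cast
    ring
  rw [cfall_succ, Nat.factorial_succ] at hsucc
  rw [if_neg m.succ_ne_zero, Nat.add_sub_cancel, hshift, hadd, Nat.factorial_succ]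
  push_cast at hsucc ⊢
  linear_combination cfall (n - m) (m + 1) * (hsucc - (m + 1) * hm)

theorem hypergeomSum_hahn_sq_eq_mul_hahnMoment (hA : s ≤ A) (hR : s ≤ R) (hs : 2 * s ≤ A + B) :
    hypergeomSum A B R (fun a _ => hahn (A + B) B R s a ^ 2) =
      hahnCoeff A B R s s * hahnMoment A B R s s 0 := by
  calc
    _ = ∑ j ∈ range (s + 1), hahnCoeff A B R s j * hahnMoment A B R s j 0 := by
      simp only [hahnMoment, ← hypergeomSum_sum_mul, cfall_zero, mul_one]
      congr! with a
      rw [sq]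
      nth_rw 2 [hahn_eq_sum]
      rw [mul_sum]
      exact sum_congr rfl fun j _ => mul_left_comm _ _ _
    _ = hahnCoeff A B R s s * hahnMoment A B R s s 0 := by
      refine sum_eq_single_of_mem s (self_mem_range_succ s) fun j hj hjs => ?_
      rw [hahnMoment_eq_zero hA hR hs (by grind), mul_zero]

theorem hypergeomSum_hahn_sq (hA : s ≤ A) (hR : s ≤ R) (hs : 2 * s ≤ A + B) :
    hypergeomSum A B R (fun a _ => hahn (A + B) B R s a ^ 2) =
      cfall B s * cfall ((A + B : ℕ) - R) s / (cfall A s * cfall R s) *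
        ((A + B).choose R / (((A + B).choose s : ℂ) -
          if s = 0 then 0 else ((A + B).choose (s - 1) : ℂ))) := by
  have hn : cfall (A + B : ℕ) (2 * s) ≠ 0 := cfall_natCast_ne_zero hs
  have hchoose := choose_sub_choose_pred_mul (A + B) s
  generalize ((A + B).choose s : ℂ) - (if s = 0 then 0 else ((A + B).choose (s - 1) : ℂ)) = d
    at hchoose ⊢
  have hd : d ≠ 0 := left_ne_zero_of_mul (hchoose ▸ hn)
  have hsign : (-1 : ℂ) ^ s * (-1) ^ s = 1 := pow_mul_pow_eq_one s (by norm_num)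
  have hcancel : s.factorial * cfall ((A + B : ℕ) - s + 1) s / cfall (A + B : ℕ) (2 * s) =
      1 / d := by
    rw [div_eq_div_iff hn hd, ← hchoose]
    ring
  rw [hypergeomSum_hahn_sq_eq_mul_hahnMoment hA hR hs, hahnMoment_add_eq hA hR hs (add_zero s),
    hahnMoment_zero_self hA hR hs, hahnCoeff, Nat.choose_self, Nat.cast_one]
  linear_combination cfall B s * cfall ((A + B : ℕ) - R) s / (cfall A s * cfall R s) *
    (A + B).choose R * (hcancel + s.factorial * cfall ((A + B : ℕ) - s + 1) s /
      cfall (A + B : ℕ) (2 * s) * hsign)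

end Hahn

theorem stmt_10_general {Ω : Type*} [Fintype Ω] [DecidableEq Ω] (n r1 r2 s : ℕ)
    (hn : Fintype.card Ω = n) (h1 : r1 + s ≤ n) (h2 : s ≤ r2) (hs : 2 * s ≤ n) :
    ∑ x1 : {x : Finset Ω // x.card = r1}, ∑ x2 : {x : Finset Ω // x.card = r2},
        (hahn n r1 r2 s ((((x2 : Finset Ω) \ (x1 : Finset Ω)).card : ℕ) : ℂ)) ^ 2 =
      (cfall (r1 : ℂ) s * cfall ((n : ℂ) - r2) s /
          (cfall ((n : ℂ) - r1) s * cfall (r2 : ℂ) s)) *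
        ((n.choose r1 : ℂ) * (n.choose r2 : ℂ) /
          ((n.choose s : ℂ) - if s = 0 then 0 else (n.choose (s - 1) : ℂ))) := by
  obtain ⟨A, rfl⟩ := Nat.exists_eq_add_of_le' (show r1 ≤ n by lia)
  have inner (x1 : {x : Finset Ω // x.card = r1}) :
      ∑ x2 : {x : Finset Ω // x.card = r2},
        hahn (A + r1) r1 r2 s #((x2 : Finset Ω) \ (x1 : Finset Ω)) ^ 2 =
      hypergeomSum A r1 r2 fun a _ => hahn (A + r1) r1 r2 s a ^ 2 := by
    have hsdiff : #(univ \ (x1 : Finset Ω)) = A := by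
      rw [← compl_eq_univ_sdiff, card_compl, hn, x1.2, Nat.add_sub_cancel]
    rw [← sum_subtype (univ.powersetCard r2) (fun _ => mem_powersetCard_univ)
      fun y => hahn (A + r1) r1 r2 s #(y \ (x1 : Finset Ω)) ^ 2]
    have hcount := sum_powersetCard_card_sdiff_card_inter univ (x1 : Finset Ω) r2
      fun a _ => hahn (A + r1) r1 r2 s a ^ 2
    rw [hcount, hsdiff, univ_inter, x1.2]
  have hA : ((A + r1 : ℕ) : ℂ) - r1 = A := by push_cast; ring
  rw [sum_congr rfl fun x1 _ => inner x1, sum_const, card_univ, Fintype.card_finset_len, hn,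
    hypergeomSum_hahn_sq (by lia) h2 hs, nsmul_eq_mul, hA]
  ring

/-- Hilbert–Schmidt norm:
`tr(Λ_s^{r1,r2} (Λ_s^{r1,r2})*) = Σ_{x1,x2} λ_s^{r1,r2}(|x2\x1|;n)²
  = ([r1]_s [n-r2]_s/([n-r1]_s [r2]_s)) binom(n,r1) binom(n,r2)/(binom(n,s)-binom(n,s-1))`. -/
theorem stmt_10 {Ω : Type*} [Fintype Ω] [DecidableEq Ω] (n r1 r2 s : ℕ)
    (hn : Fintype.card Ω = n) (h1 : r1 ≤ n) (h2 : r2 ≤ n)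
    (hs : s ≤ min (min r1 (n - r1)) (min r2 (n - r2))) :
    ∑ x1 : {x : Finset Ω // x.card = r1}, ∑ x2 : {x : Finset Ω // x.card = r2},
        (hahn n r1 r2 s ((((x2 : Finset Ω) \ (x1 : Finset Ω)).card : ℕ) : ℂ)) ^ 2 =
      (cfall (r1 : ℂ) s * cfall ((n : ℂ) - r2) s /
          (cfall ((n : ℂ) - r1) s * cfall (r2 : ℂ) s)) *
        ((n.choose r1 : ℂ) * (n.choose r2 : ℂ) /
          ((n.choose s : ℂ) - if s = 0 then 0 else (n.choose (s - 1) : ℂ))) :=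
  stmt_10_general n r1 r2 s hn (by lia) (by lia) (by lia)
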